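/- arXiv:1405.4324 — 2 statements merged into one kernel-verified Lean document; each statement's English description precedes it below -/
import Mathlib

section
/- Let S ⊊ V with S^c nonempty and let k be a positive integer. Define Ω_k(S) as the k-th root of the smallest eigenvalue of the principal submatrix (𝓛^k)_{S^c} of 𝓛^k indexed by S^c. Then Ω_k(S) ≤ ω_c(S), where ω_c(S) = inf{ω(φ) : φ ∈ L2(S^c), φ ≠ 0}; i.e., the estimated cut-off frequency never exceeds the true cut-off frequency. -/
open Matrix

noncomputable section

/-- The bandwidth `ω(φ)` of a signal `φ`: the largest eigenvalue `lam i` such that the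
component of `φ` along the eigenvector `u i` is nonzero. -/
def bandwidth {N : ℕ} (lam : Fin N → ℝ) (u : Fin N → Fin N → ℝ) (φ : Fin N → ℝ) : ℝ :=
  sSup {r : ℝ | ∃ i, r = lam i ∧ φ ⬝ᵥ u i ≠ 0}

/-- The cut-off frequency `ω_c(S)`: the infimum (in `EReal`, so `⊤` if the set is empty) of the
bandwidths of nonzero signals vanishing on `S`. -/
def cutoffFreq {N : ℕ} (lam : Fin N → ℝ) (u : Fin N → Fin N → ℝ) (S : Finset (Fin N)) : EReal :=
  sInf {r : EReal |
    ∃ φ : Fin N → ℝ, φ ≠ 0 ∧ (∀ i ∈ S, φ i = 0) ∧ r = ((bandwidth lam u φ : ℝ) : EReal)}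

/-- The quadratic form of a symmetric matrix is bounded below by any lower bound of its
eigenvalues. -/
theorem Matrix.IsHermitian.mul_dotProduct_le_of_mem_lowerBounds {n : Type*} [Fintype n]
    {A : Matrix n n ℝ} (hA : A.IsHermitian) {μ : ℝ}
    (hμ : μ ∈ lowerBounds {t : ℝ | ∃ v : n → ℝ, v ≠ 0 ∧ A *ᵥ v = t • v}) (v : n → ℝ) :
    μ * (v ⬝ᵥ v) ≤ v ⬝ᵥ A *ᵥ v := by
  classical
  have hB : (A - μ • (1 : Matrix n n ℝ)).IsHermitian := by
    refine hA.sub ?_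
    simp [Matrix.IsHermitian]
  have hpos : (A - μ • (1 : Matrix n n ℝ)).PosSemidef := by
    refine hB.posSemidef_iff_eigenvalues_nonneg.mpr fun i => ?_
    have hmem : hB.eigenvalues i + μ ∈ {t : ℝ | ∃ v : n → ℝ, v ≠ 0 ∧ A *ᵥ v = t • v} := by
      refine ⟨⇑(hB.eigenvectorBasis i), fun h0 => ?_, ?_⟩
      · apply hB.eigenvectorBasis.orthonormal.ne_zero i
        ext j
        exact congrFun h0 j
      · have h := hB.mulVec_eigenvectorBasis i
        rw [sub_mulVec, smul_mulVec, one_mulVec, sub_eq_iff_eq_add] at h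
        rw [h, add_smul]
    have := hμ hmem
    simpa using this
  have h := hpos.dotProduct_mulVec_nonneg v
  rw [sub_mulVec, smul_mulVec, one_mulVec, dotProduct_sub, dotProduct_smul] at h
  simpa using h

/-- Parseval's identity for a full orthonormal family in `ℝ ^ n`. -/
theorem dotProduct_eq_sum_of_orthonormal {n : Type*} [Fintype n] [DecidableEq n]
    {u : n → n → ℝ} (horth : ∀ i j, u i ⬝ᵥ u j = if i = j then (1 : ℝ) else 0) (x y : n → ℝ) :
    x ⬝ᵥ y = ∑ i, (x ⬝ᵥ u i) * (y ⬝ᵥ u i) := by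
  have h1 : Matrix.of u * (Matrix.of u)ᵀ = 1 := by
    ext i j
    simpa [Matrix.mul_apply, Matrix.one_apply, dotProduct] using horth i j
  have h2 : (Matrix.of u)ᵀ * Matrix.of u = 1 := mul_eq_one_comm.mp h1
  calc x ⬝ᵥ y = x ⬝ᵥ ((Matrix.of u)ᵀ * Matrix.of u) *ᵥ y := by rw [h2, one_mulVec]
    _ = (Matrix.of u *ᵥ x) ⬝ᵥ (Matrix.of u *ᵥ y) := by
      rw [← mulVec_mulVec, dotProduct_mulVec, vecMul_transpose]
    _ = ∑ i, (x ⬝ᵥ u i) * (y ⬝ᵥ u i) :=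
      Finset.sum_congr rfl fun i _ => by
        rw [dotProduct_comm x, dotProduct_comm y]; rfl

theorem pow_mulVec_of_mulVec_eq_smul {n : Type*} [Fintype n] [DecidableEq n]
    {L : Matrix n n ℝ} {x : n → ℝ} {a : ℝ} (h : L *ᵥ x = a • x) (k : ℕ) :
    L ^ k *ᵥ x = a ^ k • x := by
  induction k with
  | zero => simp
  | succ k ih => rw [pow_succ, ← mulVec_mulVec, h, mulVec_smul, ih, smul_smul, pow_succ']

theorem le_bandwidth {N : ℕ} (lam : Fin N → ℝ) (u : Fin N → Fin N → ℝ) {φ : Fin N → ℝ}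
    {i : Fin N} (hi : φ ⬝ᵥ u i ≠ 0) : lam i ≤ bandwidth lam u φ := by
  refine le_csSup ((Set.finite_range lam).bddAbove.mono ?_) ⟨i, rfl, hi⟩
  rintro _ ⟨j, rfl, -⟩
  exact ⟨j, rfl⟩

theorem bandwidth_nonneg {N : ℕ} {lam : Fin N → ℝ} (hlam : ∀ i, 0 ≤ lam i)
    (u : Fin N → Fin N → ℝ) (φ : Fin N → ℝ) : 0 ≤ bandwidth lam u φ := by
  refine Real.sSup_nonneg ?_
  rintro _ ⟨j, rfl, -⟩
  exact hlam j

/-- The Rayleigh quotient of `L ^ k` at `φ` is at most the `k`-th power of the bandwidth. -/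
theorem dotProduct_pow_mulVec_le_bandwidth_pow {N : ℕ} {L : Matrix (Fin N) (Fin N) ℝ}
    (hL : L.IsHermitian) {lam : Fin N → ℝ} {u : Fin N → Fin N → ℝ}
    (hlam : ∀ i, 0 ≤ lam i) (heig : ∀ i, L *ᵥ u i = lam i • u i)
    (horth : ∀ i j, u i ⬝ᵥ u j = if i = j then (1 : ℝ) else 0) (k : ℕ) (φ : Fin N → ℝ) :
    φ ⬝ᵥ L ^ k *ᵥ φ ≤ bandwidth lam u φ ^ k * (φ ⬝ᵥ φ) := by
  have hsymm : (L ^ k)ᵀ = L ^ k := by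
    simpa [Matrix.IsHermitian] using hL.pow k
  have hcoeff : ∀ i, (L ^ k *ᵥ φ) ⬝ᵥ u i = lam i ^ k * (φ ⬝ᵥ u i) := fun i => by
    rw [← hsymm, mulVec_transpose, ← dotProduct_mulVec,
      pow_mulVec_of_mulVec_eq_smul (heig i), dotProduct_smul, smul_eq_mul]
  rw [dotProduct_eq_sum_of_orthonormal horth φ (L ^ k *ᵥ φ),
    dotProduct_eq_sum_of_orthonormal horth φ φ, Finset.mul_sum]
  refine Finset.sum_le_sum fun i _ => ?_
  rw [hcoeff, mul_left_comm]
  by_cases hi : φ ⬝ᵥ u i = 0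
  · simp [hi]
  · exact mul_le_mul_of_nonneg_right
      (pow_le_pow_left₀ (hlam i) (le_bandwidth lam u hi) k) (mul_self_nonneg _)

/-- A dot product with a vector vanishing off `T` can be computed on `T`. -/
theorem dotProduct_comp_val_of_eq_zero {n : Type*} [Fintype n] {T : Finset n} {x : n → ℝ}
    (hx : ∀ i ∉ T, x i = 0) (y : n → ℝ) :
    (fun i : {i // i ∈ T} => y i) ⬝ᵥ (fun i => x i) = y ⬝ᵥ x := by
  simp only [dotProduct]
  rw [Finset.sum_coe_sort T fun i => y i * x i]
  exact Finset.sum_subset (Finset.subset_univ T) fun i _ hi => by rw [hx i hi, mul_zero]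

/-- **The estimated cut-off frequency never exceeds the true cut-off frequency.**
If `μ` is the smallest eigenvalue of the principal submatrix `(𝓛^k)_{Sᶜ}`, then
`Ω_k(S) = μ^{1/k} ≤ ω_c(S)`. -/
theorem estimated_cutoff_le_cutoff {N : ℕ}
    (L : Matrix (Fin N) (Fin N) ℝ) (hL : L.PosSemidef)
    (lam : Fin N → ℝ) (u : Fin N → Fin N → ℝ)
    (hlam_nonneg : ∀ i, 0 ≤ lam i) (hlam_mono : Monotone lam)
    (heig : ∀ i, L *ᵥ u i = lam i • u i)
    (horth : ∀ i j, u i ⬝ᵥ u j = if i = j then (1 : ℝ) else 0)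
    (S : Finset (Fin N)) (hS : (Sᶜ : Finset (Fin N)).Nonempty)
    (k : ℕ) (hk : 0 < k)
    (μ : ℝ)
    (hμ : IsLeast {t : ℝ | ∃ v : {i // i ∈ Sᶜ} → ℝ, v ≠ 0 ∧
        ((L ^ k).submatrix (Subtype.val : {i // i ∈ Sᶜ} → Fin N) Subtype.val) *ᵥ v = t • v} μ) :
    ((μ ^ ((1 : ℝ) / k) : ℝ) : EReal) ≤ cutoffFreq lam u S := by
  obtain ⟨⟨w, hw0, hw⟩, hlow⟩ := hμ
  have hA := (hL.pow k).submatrix (Subtype.val : {i // i ∈ Sᶜ} → Fin N)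
  have hμ0 : 0 ≤ μ := by
    have h := hA.dotProduct_mulVec_nonneg w
    rw [hw, dotProduct_smul, star_trivial, smul_eq_mul] at h
    exact nonneg_of_mul_nonneg_left h
      (lt_of_le_of_ne (dotProduct_self_star_nonneg w) (Ne.symm (by simpa using hw0)))
  refine le_sInf ?_
  rintro _ ⟨φ, hφ0, hφS, rfl⟩
  have hφ : ∀ i ∉ Sᶜ, φ i = 0 := fun i hi => hφS i (by simpa using hi)
  have hφpos : 0 < φ ⬝ᵥ φ :=
    lt_of_le_of_ne (dotProduct_self_star_nonneg φ) (Ne.symm (by simpa using hφ0))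
  have hquad := hA.isHermitian.mul_dotProduct_le_of_mem_lowerBounds hlow (fun i => φ i)
  have hrestrict : (L ^ k).submatrix (Subtype.val : {i // i ∈ Sᶜ} → Fin N) Subtype.val *ᵥ
      (fun i : {i // i ∈ Sᶜ} => φ i) = fun i : {i // i ∈ Sᶜ} => (L ^ k *ᵥ φ) i :=
    funext fun i => dotProduct_comp_val_of_eq_zero hφ ((L ^ k) i)
  rw [hrestrict, dotProduct_comm _ (fun i : {i // i ∈ Sᶜ} => (L ^ k *ᵥ φ) i),
    dotProduct_comp_val_of_eq_zero hφ, dotProduct_comp_val_of_eq_zero hφ,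
    dotProduct_comm (L ^ k *ᵥ φ) φ] at hquad
  have hle : μ ≤ bandwidth lam u φ ^ k := le_of_mul_le_mul_right
    (hquad.trans (dotProduct_pow_mulVec_le_bandwidth_pow hL.isHermitian hlam_nonneg heig horth k φ))
    hφpos
  have hω := bandwidth_nonneg hlam_nonneg u φ
  rw [EReal.coe_le_coe_iff]
  calc μ ^ ((1 : ℝ) / k) ≤ (bandwidth lam u φ ^ k) ^ ((1 : ℝ) / k) :=
        Real.rpow_le_rpow hμ0 hle (by positivity)
    _ = bandwidth lam u φ := by rw [one_div, Real.pow_rpow_inv_natCast hω hk.ne']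

end
end

section
/- Let S ⊆ V and ω ≥ 0 with ω < ω_c(S) = inf{ω(φ) : φ ∈ L2(S^c), φ ≠ 0}. Let K = {i : λ_i ≤ ω} and let U_{S,K} be the |S|×|K| matrix whose columns are the eigenvectors u_i, i ∈ K, restricted to the rows indexed by S. Then (i) U_{S,K} has trivial kernel (full column rank), and (ii) for every f ∈ PW_ω(G) there is a unique coefficient vector α with U_{S,K}α = f(S), and this α satisfies f = Σ_{i∈K} α_i u_i; i.e., f is exactly recovered from its samples on S by least squares. -/
open Matrix

noncomputable section

/-- The Paley–Wiener space `PW_ω(G)`: the span of the eigenvectors with eigenvalue at most `ω`. -/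
def PW {N : ℕ} (lam : Fin N → ℝ) (u : Fin N → Fin N → ℝ) (ω : ℝ) :
    Submodule ℝ (Fin N → ℝ) :=
  Submodule.span ℝ (u '' {i | lam i ≤ ω})

/-- A signal orthogonal to every eigenvector with eigenvalue above `ω` has bandwidth at most `ω`. -/
theorem bandwidth_le {N : ℕ} {lam : Fin N → ℝ} {u : Fin N → Fin N → ℝ} {φ : Fin N → ℝ} {ω : ℝ}
    (hω : 0 ≤ ω) (h : ∀ i, ω < lam i → φ ⬝ᵥ u i = 0) : bandwidth lam u φ ≤ ω := by
  refine Real.sSup_le ?_ hω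
  rintro _ ⟨i, rfl, hi⟩
  exact not_lt.mp fun hlt => hi (h i hlt)

/-- A signal vanishing on `S` with bandwidth below the cut-off frequency of `S` is zero. -/
theorem eq_zero_of_bandwidth_lt_cutoffFreq {N : ℕ} {lam : Fin N → ℝ} {u : Fin N → Fin N → ℝ}
    {S : Finset (Fin N)} {φ : Fin N → ℝ} (hS : ∀ i ∈ S, φ i = 0)
    (h : (bandwidth lam u φ : EReal) < cutoffFreq lam u S) : φ = 0 := by
  by_contra hφ
  exact h.not_ge (sInf_le ⟨φ, hφ, hS, rfl⟩)

/-- The inner product of a combination of orthonormal vectors, indexed by a subtype, with a member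
of the full family. -/
theorem sum_smul_dotProduct_of_orthonormal {N : ℕ} {u : Fin N → Fin N → ℝ}
    (horth : ∀ i j, u i ⬝ᵥ u j = if i = j then (1 : ℝ) else 0)
    {p : Fin N → Prop} [Fintype {i // p i}] (α : {i // p i} → ℝ) (k : Fin N) :
    (∑ j, α j • u j.1) ⬝ᵥ u k = ∑ j : {i // p i}, if j.1 = k then α j else 0 := by
  simp [sum_dotProduct, horth]

/-- Every element of `PW lam u ω` is a combination of the eigenvectors with eigenvalue at
most `ω`. -/
theorem exists_sum_smul_eq_of_mem_PW {N : ℕ} {lam : Fin N → ℝ} {u : Fin N → Fin N → ℝ} {ω : ℝ}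
    {f : Fin N → ℝ} (hf : f ∈ PW lam u ω) :
    ∃ α : {i : Fin N // lam i ≤ ω} → ℝ, ∑ j, α j • u j.1 = f := by
  rw [PW, Set.image_eq_range] at hf
  exact (Submodule.mem_span_range_iff_exists_fun ℝ).mp hf

/-- **Exact recovery by least squares.** If `ω < ω_c(S)` then (i) the matrix `U_{S,K}` (columns:
eigenvectors with `λ_i ≤ ω`, rows restricted to `S`) has trivial kernel, and (ii) every
`f ∈ PW_ω(G)` admits a unique coefficient vector `α` with `U_{S,K} α = f(S)`, and any such `α`
reconstructs `f` as `f = Σ_{i ∈ K} α_i u_i`. -/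
theorem least_squares_recovery {N : ℕ}
    (L : Matrix (Fin N) (Fin N) ℝ) (hsymm : L.IsSymm)
    (lam : Fin N → ℝ) (u : Fin N → Fin N → ℝ)
    (hlam_nonneg : ∀ i, 0 ≤ lam i) (hlam_mono : Monotone lam)
    (heig : ∀ i, L *ᵥ u i = lam i • u i)
    (horth : ∀ i j, u i ⬝ᵥ u j = if i = j then (1 : ℝ) else 0)
    (S : Finset (Fin N)) (ω : ℝ) (hω : 0 ≤ ω)
    (hcut : (ω : EReal) < cutoffFreq lam u S) :
    (∀ α : {i : Fin N // lam i ≤ ω} → ℝ,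
        (Matrix.of fun (s : {a // a ∈ S}) (j : {i : Fin N // lam i ≤ ω}) => u j.1 s.1) *ᵥ α = 0 →
        α = 0) ∧
    ∀ f ∈ PW lam u ω,
      (∃! α : {i : Fin N // lam i ≤ ω} → ℝ,
        (Matrix.of fun (s : {a // a ∈ S}) (j : {i : Fin N // lam i ≤ ω}) => u j.1 s.1) *ᵥ α =
          fun s => f s.1) ∧
      (∀ α : {i : Fin N // lam i ≤ ω} → ℝ,
        ((Matrix.of fun (s : {a // a ∈ S}) (j : {i : Fin N // lam i ≤ ω}) => u j.1 s.1) *ᵥ α =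
          fun s => f s.1) →
        f = ∑ j : {i : Fin N // lam i ≤ ω}, α j • u j.1) := by
  have hmul : ∀ (α : {i : Fin N // lam i ≤ ω} → ℝ) (s : {a // a ∈ S}),
      ((Matrix.of fun (s : {a // a ∈ S}) (j : {i : Fin N // lam i ≤ ω}) => u j.1 s.1) *ᵥ α) s =
        (∑ j, α j • u j.1) s.1 := by
    intro α s
    simp [mulVec, dotProduct, Finset.sum_apply, mul_comm]
  have hker : ∀ α : {i : Fin N // lam i ≤ ω} → ℝ,
      (Matrix.of fun (s : {a // a ∈ S}) (j : {i : Fin N // lam i ≤ ω}) => u j.1 s.1) *ᵥ α = 0 →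
      α = 0 := by
    intro α hα
    have hband : bandwidth lam u (∑ j, α j • u j.1) ≤ ω := by
      refine bandwidth_le hω fun i hi => ?_
      rw [sum_smul_dotProduct_of_orthonormal horth]
      refine Finset.sum_eq_zero fun j _ => if_neg ?_
      rintro rfl
      exact hi.not_ge j.2
    have hzero : ∑ j, α j • u j.1 = 0 := by
      refine eq_zero_of_bandwidth_lt_cutoffFreq (fun i hi => ?_)
        ((EReal.coe_le_coe_iff.mpr hband).trans_lt hcut)
      rw [← hmul α ⟨i, hi⟩, hα, Pi.zero_apply]
    funext k
    have hk := sum_smul_dotProduct_of_orthonormal horth α k.1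
    rw [hzero, zero_dotProduct] at hk
    simpa [Subtype.coe_inj] using hk.symm
  refine ⟨hker, fun f hf => ?_⟩
  obtain ⟨β, rfl⟩ := exists_sum_smul_eq_of_mem_PW hf
  have huniq : ∀ α : {i : Fin N // lam i ≤ ω} → ℝ,
      ((Matrix.of fun (s : {a // a ∈ S}) (j : {i : Fin N // lam i ≤ ω}) => u j.1 s.1) *ᵥ α =
        fun s => (∑ j, β j • u j.1) s.1) → α = β := by
    intro α hα
    refine sub_eq_zero.mp (hker _ ?_)
    rw [mulVec_sub, hα, sub_eq_zero]
    exact funext fun s => (hmul β s).symm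
  exact ⟨⟨β, funext (hmul β), huniq⟩, fun α hα => by rw [huniq α hα]⟩

end
end
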